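/- Let p(·) ∈ B(ℝⁿ). Then there exists a constant C > 0 such that for all balls B in ℝⁿ: |B|^{−1} ‖χ_B‖_{L^{p(·)}(ℝⁿ)} ‖χ_B‖_{L^{p'(·)}(ℝⁿ)} ≤ C, where p'(x) = p(x)/(p(x)−1). -/

import Mathlib

/-!
For a ball `B` and `0 < η < ‖χ_B‖_{p'}`, the integral `I = ∫_B η^{-p'}` exceeds `1`. The function
`g = χ_B η^{1-p'} / I` satisfies `∫_B g = η`, and since `(p' - 1) p = p'` and `I ≥ 1`, its
modular is `∫_B η^{-p'} I^{-p} ≤ 1`; thus `‖g‖_p ≤ 1`. As `Mg ≥ |B|⁻¹ η` on `B`, boundedness of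
`M` gives `|B|⁻¹ η ‖χ_B‖_p ≤ ‖Mg‖_p ≤ C`, and `η → ‖χ_B‖_{p'}` finishes the proof.

The infimum defining `luxNorm` is `0` on functions of infinite norm, so the step
`|B|⁻¹ η ‖χ_B‖_p ≤ ‖Mg‖_p` requires `Mg ∈ L^{p(·)}`. This holds because `g` is bounded with bounded
support: `Mg(x)` is then `O((1 + |x - c|)^{-n})` (`avg_le`), which lies in `L^{p(·)}` since
`ess inf p > 1` (`modular_finite`). The bound on averages also ensures that the real supremum
defining `maxOp` is a genuine one.
-/

open MeasureTheory Metric Set Filter ENNReal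

noncomputable section

abbrev Vn (n : ℕ) := EuclideanSpace ℝ (Fin n)

/-- The Luxemburg norm `‖f‖_{L^{p(·)}(E)}` with variable exponent `p` on the set `E`. -/
def luxNorm {n : ℕ} (E : Set (Vn n)) (p f : Vn n → ℝ) : ℝ :=
  sInf {η : ℝ | 0 < η ∧ ∫⁻ x in E, ENNReal.ofReal ((|f x| / η) ^ (p x)) ∂volume ≤ 1}

/-- Membership in the variable Lebesgue space `L^{p(·)}(E)`. -/
def MemLux {n : ℕ} (E : Set (Vn n)) (p f : Vn n → ℝ) : Prop :=
  Measurable f ∧ ∃ η : ℝ, 0 < η ∧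
    ∫⁻ x in E, ENNReal.ofReal ((|f x| / η) ^ (p x)) ∂volume ≤ 1

/-- The class `𝒫(E)`: measurable exponents with values in `[1,∞)`,
`ess inf p > 1` and `ess sup p < ∞`. -/
def IsPExp {n : ℕ} (E : Set (Vn n)) (p : Vn n → ℝ) : Prop :=
  Measurable p ∧ (∀ x ∈ E, 1 ≤ p x) ∧
    1 < essInf p (volume.restrict E) ∧
    IsBoundedUnder (· ≤ ·) (ae (volume.restrict E)) p

/-- The pointwise conjugate exponent `p'(x) = p(x)/(p(x)-1)`. -/
def conjExp {n : ℕ} (p : Vn n → ℝ) : Vn n → ℝ := fun x => p x / (p x - 1)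

/-- The Hardy–Littlewood maximal operator relative to the set `E`. -/
def maxOp {n : ℕ} (E : Set (Vn n)) (f : Vn n → ℝ) (x : Vn n) : ℝ :=
  ⨆ B : {B : Set (Vn n) // (∃ c r, 0 < r ∧ B = Metric.ball c r) ∧ x ∈ B},
    (volume B.1).toReal⁻¹ * ∫ y in B.1 ∩ E, |f y|

/-- The class `ℬ(ℝⁿ)`: exponents in `𝒫(ℝⁿ)` for which `M` is bounded on `L^{p(·)}(ℝⁿ)`. -/
def IsBExp {n : ℕ} (p : Vn n → ℝ) : Prop :=
  IsPExp Set.univ p ∧ ∃ C : ℝ, 0 < C ∧ ∀ f : Vn n → ℝ, MemLux Set.univ p f →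
    luxNorm Set.univ p (maxOp Set.univ f) ≤ C * luxNorm Set.univ p f

/-- The characteristic function of a set. -/
def chiS {n : ℕ} (S : Set (Vn n)) : Vn n → ℝ := S.indicator fun _ => 1

/-- The property of `δ₂` from Lemma 2.3 (for the conjugate exponent `q'`):
`‖χ_S‖_{q'} / ‖χ_B‖_{q'} ≤ C (|S|/|B|)^{δ₂}` for all balls `B` and measurable `S ⊆ B`. -/
def Delta2Prop {n : ℕ} (q : Vn n → ℝ) (δ₂ : ℝ) : Prop :=
  ∃ C : ℝ, 0 < C ∧ ∀ (c : Vn n) (r : ℝ), 0 < r → ∀ S ⊆ Metric.ball c r, MeasurableSet S →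
    luxNorm Set.univ (conjExp q) (chiS S) ≤
      C * ((volume S).toReal / (volume (Metric.ball c r)).toReal) ^ δ₂ *
        luxNorm Set.univ (conjExp q) (chiS (Metric.ball c r))

/-- `B_k = {x : |x| ≤ 2^k}`. -/
def Bk (n : ℕ) (k : ℤ) : Set (Vn n) := Metric.closedBall 0 ((2 : ℝ) ^ k)

/-- `A_k = B_k \ B_{k-1}`. -/
def Ak (n : ℕ) (k : ℤ) : Set (Vn n) := Bk n k \ Bk n (k - 1)

/-- The homogeneous Herz norm `‖f‖_{K̇^{α,p}_{q(·)}}`, valued in `ℝ≥0∞`. -/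
def herzNorm {n : ℕ} (α p : ℝ) (q f : Vn n → ℝ) : ℝ≥0∞ :=
  (∑' k : ℤ, (ENNReal.ofReal ((2 : ℝ) ^ ((k : ℝ) * α)) *
      ENNReal.ofReal (luxNorm Set.univ q fun x => f x * chiS (Ak n k) x)) ^ p) ^ (1 / p)

/-- The homogeneous weak Herz norm `‖f‖_{WK̇^{α,p}_{q(·)}}`, valued in `ℝ≥0∞`. -/
def weakHerzNorm {n : ℕ} (α p : ℝ) (q f : Vn n → ℝ) : ℝ≥0∞ :=
  ⨆ lam : {l : ℝ // 0 < l},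
    ENNReal.ofReal lam.1 *
      (∑' k : ℤ, (ENNReal.ofReal ((2 : ℝ) ^ ((k : ℝ) * α)) *
          ENNReal.ofReal (luxNorm Set.univ q (chiS {x ∈ Ak n k | lam.1 < |f x|}))) ^ p) ^ (1 / p)

/-- The weak variable Lebesgue norm `‖f‖_{WL^{q(·)}}`. -/
def weakLuxNorm {n : ℕ} (q f : Vn n → ℝ) : ℝ :=
  ⨆ lam : {l : ℝ // 0 < l}, lam.1 * luxNorm Set.univ q (chiS {x | lam.1 < |f x|})

/-- `χ̃_k` : for `k ≥ 1` the indicator of `A_k`, for `k = 0` the indicator of `B_0`. -/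
def chiTilde (n : ℕ) (k : ℕ) : Vn n → ℝ :=
  if k = 0 then chiS (Bk n 0) else chiS (Ak n (k : ℤ))

/-- The non-homogeneous Herz norm `‖f‖_{K^{α,p}_{q(·)}}`. -/
def herzNormNH {n : ℕ} (α p : ℝ) (q f : Vn n → ℝ) : ℝ≥0∞ :=
  (∑' k : ℕ, (ENNReal.ofReal ((2 : ℝ) ^ ((k : ℝ) * α)) *
      ENNReal.ofReal (luxNorm Set.univ q fun x => f x * chiTilde n k x)) ^ p) ^ (1 / p)

/-- The non-homogeneous weak Herz norm `‖f‖_{WK^{α,p}_{q(·)}}`. -/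
def weakHerzNormNH {n : ℕ} (α p : ℝ) (q f : Vn n → ℝ) : ℝ≥0∞ :=
  ⨆ lam : {l : ℝ // 0 < l},
    ENNReal.ofReal lam.1 *
      ((ENNReal.ofReal (luxNorm Set.univ q (chiS {x ∈ Bk n 0 | lam.1 < |f x|}))) ^ p +
        ∑' k : {k : ℕ // 1 ≤ k}, (ENNReal.ofReal ((2 : ℝ) ^ ((k.1 : ℝ) * α)) *
          ENNReal.ofReal (luxNorm Set.univ q (chiS {x ∈ Ak n (k.1 : ℤ) | lam.1 < |f x|}))) ^ p) ^
        (1 / p)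

/-- A dyadic central `(α, q(·))`-atom supported in `B_k`, with moments up to order `s`
vanishing. -/
def IsCentralAtom {n : ℕ} (q : Vn n → ℝ) (α : ℝ) (s : ℕ) (k : ℤ) (a : Vn n → ℝ) : Prop :=
  Measurable a ∧ (∀ x, x ∉ Bk n k → a x = 0) ∧
    luxNorm Set.univ q a ≤ (volume (Bk n k)).toReal ^ (-(α / (n : ℝ))) ∧
    ∀ β : Fin n → ℕ, (∑ i, β i) ≤ s → ∫ x, a x * ∏ i, x i ^ β i = 0

/-- Partial derivative in the `i`-th coordinate direction. -/
def pDeriv {n : ℕ} (i : Fin n) (f : Vn n → ℝ) : Vn n → ℝ :=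
  fun x => fderiv ℝ f x (EuclideanSpace.single i (1 : ℝ))

/-- Iterated partial derivative `D^β` for a multi-index `β`. -/
def mDeriv {n : ℕ} (β : Fin n → ℕ) (f : Vn n → ℝ) : Vn n → ℝ :=
  (List.finRange n).foldr (fun i g => (pDeriv i)^[β i] g) f

/-- The class `𝒜_N` of Schwartz functions `φ` with
`sup_{|a|,|b| ≤ N} |x^a D^b φ(x)| ≤ 1`. -/
def InClassA {n : ℕ} (N : ℕ) (φ : Vn n → ℝ) : Prop :=
  (∃ ψ : SchwartzMap (Vn n) ℝ, ⇑ψ = φ) ∧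
    ∀ a b : Fin n → ℕ, (∑ i, a i) ≤ N → (∑ i, b i) ≤ N →
      ∀ x : Vn n, |(∏ i, x i ^ a i) * mDeriv b φ x| ≤ 1

/-- The grand maximal function `G_N(g)(x) = sup_{φ ∈ 𝒜_N} sup_{|y-x|<t} |(g ∗ φ_t)(y)|`. -/
def grandMax {n : ℕ} (N : ℕ) (g : Vn n → ℝ) (x : Vn n) : ℝ :=
  ⨆ φ : {φ : Vn n → ℝ // InClassA N φ},
    ⨆ yt : {yt : Vn n × ℝ // 0 < yt.2 ∧ dist x yt.1 < yt.2},
      |∫ z, g z * ((yt.1.2 ^ n)⁻¹ * φ.1 ((yt.1.2)⁻¹ • (yt.1.1 - z)))|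


/-! ### Luxemburg norms and volumes of balls -/

lemma luxNorm_le_of_modular {n : ℕ} {p f : Vn n → ℝ} {η : ℝ} (hη : 0 < η)
    (h : ∫⁻ x in univ, ENNReal.ofReal ((|f x| / η) ^ (p x)) ∂volume ≤ 1) :
    luxNorm univ p f ≤ η :=
  csInf_le ⟨0, fun _ hy => hy.1.le⟩ ⟨hη, h⟩

lemma luxNorm_nonneg {n : ℕ} (p f : Vn n → ℝ) : 0 ≤ luxNorm univ p f :=
  Real.sInf_nonneg fun _ hy => hy.1.le

lemma volume_ball_toReal {n : ℕ} (c : Vn n) {r : ℝ} (hr : 0 < r) :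
    (volume (ball c r)).toReal = r ^ n * (volume (ball (0 : Vn n) 1)).toReal := by
  rw [Measure.addHaar_ball_of_pos _ _ hr, ENNReal.toReal_mul, ENNReal.toReal_ofReal (by positivity)]
  simp

lemma volume_ball_toReal_pos {n : ℕ} (c : Vn n) {r : ℝ} (hr : 0 < r) :
    0 < (volume (ball c r)).toReal :=
  ENNReal.toReal_pos (measure_ball_pos _ _ hr).ne' measure_ball_lt_top.ne

/-! ### Decay of the maximal function of a bounded function with bounded support -/

/-- Averages over balls containing `x` of a bounded function supported in `ball c r` decay like
`(1 + ‖x - c‖)^{-n}`: a ball of radius `r'` that contains `x` and meets the support has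
`‖x - c‖ < r + 2 r'`. -/
lemma avg_le {n : ℕ} {g : Vn n → ℝ} {K : ℝ} (hK : 0 ≤ K) (hgK : ∀ x, |g x| ≤ K)
    {c : Vn n} {r : ℝ} (hr : 0 < r) (hsupp : ∀ x, x ∉ ball c r → g x = 0)
    {c' x : Vn n} {r' : ℝ} (hr' : 0 < r') (hx : x ∈ ball c' r') :
    (volume (ball c' r')).toReal⁻¹ * ∫ y in ball c' r' ∩ univ, |g y| ≤
      K * ((1 + 3 * r) / (1 + ‖x - c‖)) ^ n := by
  have hV := volume_ball_toReal_pos c' hr'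
  have hint : ∫ y in ball c' r' ∩ univ, |g y| ≤
      K * (volume (ball c r ∩ ball c' r')).toReal := by
    rw [inter_univ]
    have h1 : ∫ y in ball c' r', |g y| ≤
        ∫ y in ball c' r', (ball c r).indicator (fun _ => K) y := by
      refine integral_mono_of_nonneg (ae_of_all _ fun y => abs_nonneg _) ?_
        (ae_of_all _ fun y => ?_)
      · rw [integrable_indicator_iff measurableSet_ball]
        refine integrableOn_const ?_
        rw [Measure.restrict_apply measurableSet_ball]
        exact ((measure_mono inter_subset_left).trans_lt measure_ball_lt_top).ne
      · by_cases hy : y ∈ ball c r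
        · simpa [indicator_of_mem hy] using hgK y
        · simp [indicator_of_notMem hy, hsupp y hy]
    refine h1.trans (le_of_eq ?_)
    rw [integral_indicator measurableSet_ball, Measure.restrict_restrict measurableSet_ball,
      setIntegral_const, Measure.real, smul_eq_mul, mul_comm]
  rw [inv_mul_le_iff₀ hV]
  refine hint.trans ?_
  rcases (ball c r ∩ ball c' r').eq_empty_or_nonempty with he | ⟨y, hy, hy'⟩
  · rw [he]; simp only [measure_empty, ENNReal.toReal_zero, mul_zero]; positivity
  have hdist : ‖x - c‖ ≤ r + 2 * r' := by
    rw [← dist_eq_norm]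
    rw [mem_ball] at hx hy hy'
    have := dist_triangle4 x c' y c
    rw [dist_comm c' y] at this
    linarith
  have hn := norm_nonneg (x - c)
  rw [mul_left_comm]
  refine mul_le_mul_of_nonneg_left ?_ hK
  rcases le_or_gt r' r with h | h
  · have h1 : (volume (ball c r ∩ ball c' r')).toReal ≤ (volume (ball c' r')).toReal :=
      ENNReal.toReal_mono measure_ball_lt_top.ne (measure_mono inter_subset_right)
    have h2 : 1 ≤ ((1 + 3 * r) / (1 + ‖x - c‖)) ^ n := by
      refine one_le_pow₀ ?_
      rw [le_div_iff₀ (by positivity)]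
      linarith
    nlinarith
  · have h1 : (volume (ball c r ∩ ball c' r')).toReal ≤ (volume (ball c r)).toReal :=
      ENNReal.toReal_mono measure_ball_lt_top.ne (measure_mono inter_subset_left)
    refine h1.trans ?_
    rw [volume_ball_toReal c hr, volume_ball_toReal c' hr', mul_right_comm, ← mul_pow]
    refine mul_le_mul_of_nonneg_right (pow_le_pow_left₀ hr.le ?_ n) ENNReal.toReal_nonneg
    rw [mul_div_assoc', le_div_iff₀ (by positivity)]
    nlinarith

lemma modular_decay_lt_top {n : ℕ} {a : ℝ} (ha : 1 < a) (c : Vn n) :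
    ∫⁻ x : Vn n, ENNReal.ofReal ((1 + ‖x - c‖) ^ (-((n : ℝ) * a))) < ⊤ := by
  rcases Nat.eq_zero_or_pos n with rfl | hn
  · -- `Vn 0` is a single point, of measure one.
    simp
  · have h := finite_integral_one_add_norm (E := Vn n) (μ := volume) (r := (n : ℝ) * a)
      (by
        have : (0 : ℝ) < n := by exact_mod_cast hn
        simp only [finrank_euclideanSpace, Fintype.card_fin]
        nlinarith)
    rwa [lintegral_sub_right_eq_self
      (fun x : Vn n => ENNReal.ofReal ((1 + ‖x‖) ^ (-((n : ℝ) * a)))) c]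

/-- A nonnegative function that is `O((1 + ‖x - c‖)^{-n})` belongs to `L^{p(·)}`, because
`p ≥ a > 1` almost everywhere. -/
lemma modular_finite {n : ℕ} {p F : Vn n → ℝ} {a : ℝ} (ha : 1 < a) (hp : ∀ᵐ x, a ≤ p x)
    (c : Vn n) {D : ℝ} (hD : 0 < D) (hF0 : ∀ x, 0 ≤ F x)
    (hF : ∀ x, F x ≤ D * (1 / (1 + ‖x - c‖)) ^ n) :
    ∃ η : ℝ, 0 < η ∧ ∫⁻ x in univ, ENNReal.ofReal ((|F x| / η) ^ (p x)) ∂volume ≤ 1 := by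
  set J := ∫⁻ x : Vn n, ENNReal.ofReal ((1 + ‖x - c‖) ^ (-((n : ℝ) * a))) with hJ
  have hJt : J < ⊤ := modular_decay_lt_top ha c
  set e : ℝ := 1 / (1 + J.toReal) with he
  have hJ0 : 0 ≤ J.toReal := ENNReal.toReal_nonneg
  have he0 : 0 < e := by positivity
  have he1 : e ≤ 1 := by rw [he, div_le_one (by positivity)]; linarith
  refine ⟨D / e, by positivity, ?_⟩
  rw [Measure.restrict_univ]
  have hle : ∫⁻ x, ENNReal.ofReal ((|F x| / (D / e)) ^ (p x)) ≤
      ∫⁻ x : Vn n, ENNReal.ofReal e * ENNReal.ofReal ((1 + ‖x - c‖) ^ (-((n : ℝ) * a))) := by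
    refine lintegral_mono_ae ?_
    filter_upwards [hp] with x hx
    rw [← ENNReal.ofReal_mul he0.le]
    refine ENNReal.ofReal_le_ofReal ?_
    have hn := norm_nonneg (x - c)
    set u : ℝ := (1 / (1 + ‖x - c‖)) ^ n with hu
    have hu0 : 0 < u := by positivity
    have hu1 : u ≤ 1 := by
      refine pow_le_one₀ (by positivity) ?_
      rw [div_le_one (by positivity)]; linarith
    have h1 : |F x| / (D / e) ≤ e * u := by
      rw [abs_of_nonneg (hF0 x), div_le_iff₀ (by positivity)]
      calc F x ≤ D * u := hF x
        _ = e * u * (D / e) := by field_simp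
    have hua : u ^ a = (1 + ‖x - c‖) ^ (-((n : ℝ) * a)) := by
      rw [hu, ← Real.rpow_natCast, ← Real.rpow_mul (by positivity), one_div,
        Real.inv_rpow (by positivity), Real.rpow_neg (by positivity)]
    calc (|F x| / (D / e)) ^ p x ≤ (e * u) ^ p x :=
          Real.rpow_le_rpow (by positivity) h1 (by linarith)
      _ = e ^ p x * u ^ p x := Real.mul_rpow he0.le hu0.le
      _ ≤ e ^ (1 : ℝ) * u ^ a :=
          mul_le_mul (Real.rpow_le_rpow_of_exponent_ge he0 he1 (by linarith))
            (Real.rpow_le_rpow_of_exponent_ge hu0 hu1 hx) (by positivity) (by positivity)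
      _ = _ := by rw [Real.rpow_one, hua]
  refine hle.trans ?_
  rw [lintegral_const_mul' _ _ ENNReal.ofReal_ne_top, ← hJ, ← ENNReal.ofReal_toReal hJt.ne,
    ← ENNReal.ofReal_mul he0.le, ← ENNReal.ofReal_one]
  refine ENNReal.ofReal_le_ofReal ?_
  rw [he, one_div_mul_eq_div, div_le_one (by positivity)]
  linarith

/-! ### Duality and the estimate on balls -/

set_option maxHeartbeats 1000000 in
/-- Norm conjugate for `χ_B`: a bounded function supported in `B`, in the unit ball of
`L^{p(·)}`, whose integral is a prescribed `η < ‖χ_B‖_{p'}`. -/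
lemma exists_dual {n : ℕ} {p : Vn n → ℝ} (hpm : Measurable p) (hp1 : ∀ x, 1 ≤ p x)
    {a : ℝ} (ha : 1 < a) (hp : ∀ᵐ x, a ≤ p x) (c : Vn n) {r : ℝ} {η : ℝ}
    (hη : 0 < η) (hlt : η < luxNorm univ (conjExp p) (chiS (ball c r))) :
    ∃ (g : Vn n → ℝ) (K : ℝ), 0 < K ∧ Measurable g ∧ (∀ x, |g x| ≤ K) ∧ (∀ x, 0 ≤ g x) ∧
      (∀ x, x ∉ ball c r → g x = 0) ∧ ∫ x in ball c r, g x = η ∧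
      ∫⁻ x in univ, ENNReal.ofReal ((|g x| / 1) ^ (p x)) ∂volume ≤ 1 := by
  have hqm : Measurable (conjExp p) := hpm.div (hpm.sub_const 1)
  -- Discarding the null set `{p < a}` keeps `p'`, hence `η^{-p'}`, bounded.
  set S : Set (Vn n) := ball c r ∩ {x | a ≤ p x} with hS
  have hSm : MeasurableSet S :=
    measurableSet_ball.inter (measurableSet_le measurable_const hpm)
  set t : ℝ := 1 / η with ht
  have ht0 : 0 < t := by positivity
  set φ : Vn n → ℝ := S.indicator fun x => t ^ conjExp p x with hφ
  have hφm : Measurable φ := (measurable_const.pow hqm).indicator hSm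
  have hφ0 : ∀ x, 0 ≤ φ x := fun x => indicator_nonneg (fun _ _ => by positivity) x
  set L : ℝ := (max 1 t) ^ (a / (a - 1)) with hL
  have hL0 : 0 < L := by positivity
  have hφL : ∀ x, φ x ≤ L := by
    intro x
    by_cases hx : x ∈ S
    · rw [hφ, indicator_of_mem hx]
      have hx2 : a ≤ p x := hx.2
      have hq0 : 0 ≤ conjExp p x := div_nonneg (by linarith) (by linarith)
      have hqa : conjExp p x ≤ a / (a - 1) := by
        unfold conjExp
        rw [div_le_div_iff₀ (by linarith) (by linarith)]
        nlinarith
      exact (Real.rpow_le_rpow ht0.le (le_max_right _ _) hq0).trans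
        (Real.rpow_le_rpow_of_exponent_le (le_max_left _ _) hqa)
    · rw [hφ, indicator_of_notMem hx]; exact hL0.le
  have hφsupp : ∀ x, x ∉ ball c r → φ x = 0 := fun x hx =>
    indicator_of_notMem (fun h => hx h.1) _
  have hφint : Integrable φ := by
    have : IntegrableOn φ (ball c r) :=
      Measure.integrableOn_of_bounded (M := L) measure_ball_lt_top.ne hφm.aestronglyMeasurable
        (ae_of_all _ fun x => by rw [Real.norm_eq_abs, abs_of_nonneg (hφ0 x)]; exact hφL x)
    refine this.integrable_of_forall_notMem_eq_zero hφsupp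
  set I : ℝ := ∫ x, φ x with hI
  have hIl : ENNReal.ofReal I = ∫⁻ x, ENNReal.ofReal (φ x) :=
    ofReal_integral_eq_lintegral_ofReal hφint (ae_of_all _ hφ0)
  have hI1 : 1 < I := by
    by_contra! hcon
    refine absurd (luxNorm_le_of_modular (p := conjExp p) (f := chiS (ball c r)) hη ?_)
      (not_le.2 hlt)
    have : ∫⁻ x in univ, ENNReal.ofReal ((|chiS (ball c r) x| / η) ^ (conjExp p x)) =
        ∫⁻ x, ENNReal.ofReal (φ x) := by
      rw [Measure.restrict_univ]
      refine lintegral_congr_ae ?_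
      filter_upwards [hp] with x hx
      by_cases hxB : x ∈ ball c r
      · have hxS : x ∈ S := ⟨hxB, hx⟩
        rw [hφ, indicator_of_mem hxS, chiS, indicator_of_mem hxB, abs_one]
      · have hq : conjExp p x ≠ 0 := (div_pos (by linarith) (by linarith)).ne'
        rw [hφsupp x hxB, chiS, indicator_of_notMem hxB, abs_zero, zero_div, Real.zero_rpow hq]
    rw [this, ← hIl]
    exact ENNReal.ofReal_le_one.2 hcon
  have hI0 : 0 < I := by linarith
  refine ⟨fun x => η / I * φ x, η / I * L, by positivity, hφm.const_mul _, ?_, ?_, ?_, ?_, ?_⟩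
  · intro x
    rw [abs_of_nonneg (mul_nonneg (by positivity) (hφ0 x))]
    exact mul_le_mul_of_nonneg_left (hφL x) (by positivity)
  · exact fun x => mul_nonneg (by positivity) (hφ0 x)
  · intro x hx; simp [hφsupp x hx]
  · rw [integral_const_mul, setIntegral_eq_integral_of_forall_compl_eq_zero hφsupp, ← hI]
    field_simp
  · rw [Measure.restrict_univ]
    have hle : ∫⁻ x, ENNReal.ofReal ((|η / I * φ x| / 1) ^ (p x)) ≤
        ∫⁻ x, ENNReal.ofReal I⁻¹ * ENNReal.ofReal (φ x) := by
      refine lintegral_mono fun x => ?_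
      rw [← ENNReal.ofReal_mul (by positivity)]
      refine ENNReal.ofReal_le_ofReal ?_
      rw [div_one, abs_of_nonneg (mul_nonneg (by positivity) (hφ0 x))]
      by_cases hx : x ∈ S
      · have hx2 : a ≤ p x := hx.2
        have hφx : φ x = t ^ conjExp p x := by rw [hφ, indicator_of_mem hx]
        have h1 : η / I * φ x = I⁻¹ * t ^ (conjExp p x - 1) := by
          rw [hφx, Real.rpow_sub_one ht0.ne', ht]
          field_simp
        have h2 : (conjExp p x - 1) * p x = conjExp p x := by
          have : p x - 1 ≠ 0 := by linarith
          unfold conjExp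
          field_simp
          ring
        rw [h1, Real.mul_rpow (inv_pos.2 hI0).le (Real.rpow_pos_of_pos ht0 _).le,
          ← Real.rpow_mul ht0.le, h2, hφx]
        refine mul_le_mul_of_nonneg_right ?_ (Real.rpow_pos_of_pos ht0 _).le
        have := Real.rpow_le_rpow_of_exponent_ge (inv_pos.2 hI0) (inv_le_one_of_one_le₀ hI1.le)
          (hp1 x)
        exact this.trans_eq (Real.rpow_one _)
      · have hφx : φ x = 0 := by rw [hφ, indicator_of_notMem hx]
        rw [hφx, mul_zero, mul_zero, Real.zero_rpow (by linarith [hp1 x])]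
    refine hle.trans ?_
    rw [lintegral_const_mul' _ _ ENNReal.ofReal_ne_top, ← hIl,
      ← ENNReal.ofReal_mul (by positivity), inv_mul_cancel₀ hI0.ne', ENNReal.ofReal_one]

/-- Lemma 2.4: for `p(·) ∈ ℬ(ℝⁿ)` there is `C > 0` with
`|B|⁻¹ ‖χ_B‖_{p} ‖χ_B‖_{p'} ≤ C` for all balls `B`. -/
theorem statement4 {n : ℕ} (p : Vn n → ℝ) (hp : IsBExp p) :
    ∃ C : ℝ, 0 < C ∧ ∀ (c : Vn n) (r : ℝ), 0 < r →
      (volume (Metric.ball c r)).toReal⁻¹ * luxNorm Set.univ p (chiS (Metric.ball c r)) *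
          luxNorm Set.univ (conjExp p) (chiS (Metric.ball c r)) ≤ C := by
  obtain ⟨⟨hpm, hp1, hess, -⟩, C, hC, hM⟩ := hp
  have hp1' : ∀ x, 1 ≤ p x := fun x => hp1 x (mem_univ x)
  obtain ⟨a, ha, hpa⟩ : ∃ a : ℝ, 1 < a ∧ ∀ᵐ x, a ≤ p x := by
    rw [Measure.restrict_univ, essInf, liminf_eq] at hess
    have hne : {a : ℝ | ∀ᵐ x, a ≤ p x}.Nonempty := ⟨1, ae_of_all _ hp1'⟩
    obtain ⟨a, ha, h1⟩ := exists_lt_of_lt_csSup hne hess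
    exact ⟨a, h1, ha⟩
  refine ⟨C, hC, fun c r hr => ?_⟩
  have hV := volume_ball_toReal_pos c hr
  set V := (volume (ball c r)).toReal with hVdef
  set N := luxNorm univ p (chiS (ball c r)) with hN
  have hN0 : 0 ≤ N := luxNorm_nonneg _ _
  have key : ∀ η : ℝ, 0 < η → η < luxNorm univ (conjExp p) (chiS (ball c r)) →
      V⁻¹ * N * η ≤ C := by
    intro η hη hlt
    obtain ⟨g, K, hK, hgm, hgK, hg0, hsupp, hgint, hmod⟩ :=
      exists_dual hpm hp1' ha hpa c hη hlt
    have hg1 : luxNorm univ p g ≤ 1 := luxNorm_le_of_modular one_pos hmod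
    have hMg : luxNorm univ p (maxOp univ g) ≤ C :=
      (hM g ⟨hgm, 1, one_pos, hmod⟩).trans (by nlinarith)
    have hbd : ∀ x, ∀ B : {B : Set (Vn n) // (∃ c r, 0 < r ∧ B = Metric.ball c r) ∧ x ∈ B},
        (volume B.1).toReal⁻¹ * ∫ y in B.1 ∩ univ, |g y| ≤
          K * ((1 + 3 * r) / (1 + ‖x - c‖)) ^ n := by
      rintro x ⟨B, ⟨c', r', hr', rfl⟩, hx⟩
      exact avg_le hK.le hgK hr hsupp hr' hx
    have hM0 : ∀ x, 0 ≤ maxOp univ g x := fun x =>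
      Real.iSup_nonneg fun B => mul_nonneg (by positivity)
        (integral_nonneg fun y => abs_nonneg _)
    have hMle : ∀ x, maxOp univ g x ≤ K * (1 + 3 * r) ^ n * (1 / (1 + ‖x - c‖)) ^ n := by
      intro x
      refine Real.iSup_le (fun B => (hbd x B).trans (le_of_eq ?_)) (by positivity)
      rw [mul_assoc, ← mul_pow, mul_one_div]
    have hMge : ∀ x ∈ ball c r, V⁻¹ * η ≤ maxOp univ g x := by
      intro x hx
      refine le_of_eq_of_le ?_ (le_ciSup
        (f := fun B : {B : Set (Vn n) // (∃ c r, 0 < r ∧ B = Metric.ball c r) ∧ x ∈ B} =>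
          (volume B.1).toReal⁻¹ * ∫ y in B.1 ∩ univ, |g y|)
        ⟨_, by rintro _ ⟨B, rfl⟩; exact hbd x B⟩ ⟨ball c r, ⟨c, r, hr, rfl⟩, hx⟩)
      simp only [inter_univ]
      rw [← hgint]
      simp only [abs_of_nonneg (hg0 _), hVdef]
    obtain ⟨η₀, hη₀⟩ := modular_finite (F := maxOp univ g) ha hpa c (by positivity) hM0 hMle
    refine le_trans (le_csInf ⟨η₀, hη₀⟩ ?_) hMg
    rintro s ⟨hs, hsm⟩
    have : N ≤ s / (V⁻¹ * η) := by
      refine luxNorm_le_of_modular (by positivity) (le_trans (lintegral_mono fun x => ?_) hsm)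
      refine ENNReal.ofReal_le_ofReal
        (Real.rpow_le_rpow (by positivity) ?_ (by linarith [hp1' x]))
      by_cases hx : x ∈ ball c r
      · rw [chiS, indicator_of_mem hx, abs_one, abs_of_nonneg (hM0 x), one_div_div]
        exact div_le_div_of_nonneg_right (hMge x hx) hs.le
      · rw [chiS, indicator_of_notMem hx, abs_zero, zero_div]
        positivity
    rw [le_div_iff₀ (by positivity)] at this
    linarith
  rcases (luxNorm_nonneg (conjExp p) (chiS (ball c r))).eq_or_lt with h0 | h0
  · rw [← h0, mul_zero]; exact hC.le
  · by_contra! hcon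
    have hVN : 0 ≤ V⁻¹ * N := by positivity
    have hVN' : 0 < V⁻¹ * N := by
      rcases hVN.eq_or_lt with h | h
      · rw [← h, zero_mul] at hcon; linarith
      · exact h
    have h1 : C / (V⁻¹ * N) < luxNorm univ (conjExp p) (chiS (ball c r)) := by
      rw [div_lt_iff₀ hVN']; linarith
    obtain ⟨η, h2, h3⟩ := exists_between h1
    have h4 := key η (lt_trans (by positivity) h2) h3
    rw [div_lt_iff₀ hVN'] at h2
    linarith

end
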